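/- arXiv:1803.00114 — 4 statements merged into one kernel-verified Lean document; each statement's English description precedes it below -/
import Mathlib

section
/- Let w = (w_1, …, w_m) be a positive weight vector, π a permutation of {1, …, m}, and 1 ≤ i < j ≤ m positions with w_{π_i} > w_{π_j}. Let π' be the permutation obtained from π by swapping the entries in positions i and j (π'_i = π_j, π'_j = π_i, and π'_k = π_k for k ∉ {i, j}). Then P_w(π) > P_w(π'). -/
open Finset

/-- The permutation probability: `P_w(π) = ∏_j w_{π_j} / (∑_{l=j}^m w_{π_l})`. -/
noncomputable def permProb {m : ℕ} (w : Fin m → ℝ) (π : Equiv.Perm (Fin m)) : ℝ :=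
  ∏ j : Fin m, w (π j) / ∑ l ∈ Finset.univ.filter (fun l => j ≤ l), w (π l)

/-- On indices other than `i`, precomposing with `swap i j` can only increase `f` if `f j ≤ f i`. -/
theorem le_apply_swap {α : Type*} [DecidableEq α] (f : α → ℝ) {i j l : α}
    (hf : f j ≤ f i) (hl : l ≠ i) : f l ≤ f (Equiv.swap i j l) := by
  by_cases hlj : l = j
  · simpa [hlj] using hf
  · rw [Equiv.swap_apply_of_ne_of_ne hl hlj]

/-- Moving a larger value to a later position can only increase the tail sums. -/
theorem tail_sum_le_tail_sum_swap {α : Type*} [Fintype α] [LinearOrder α] (f : α → ℝ) {i j : α}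
    (hij : i < j) (hf : f j ≤ f i) (k : α) :
    ∑ l ∈ univ.filter (fun l => k ≤ l), f l ≤
      ∑ l ∈ univ.filter (fun l => k ≤ l), f (Equiv.swap i j l) := by
  rcases le_or_gt k i with hk | hk
  · refine (Finset.sum_equiv (Equiv.swap i j) (fun l => ?_) (fun _ _ => rfl)).ge
    simp only [mem_filter, mem_univ, true_and]
    by_cases hli : l = i
    · simp [hli, hk, hk.trans hij.le]
    by_cases hlj : l = j
    · simp [hlj, hk, hk.trans hij.le]
    rw [Equiv.swap_apply_of_ne_of_ne hli hlj]
  · refine Finset.sum_le_sum fun l hl => le_apply_swap f hf ?_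
    exact (hk.trans_le (mem_filter.mp hl).2).ne'

/-- The tail sum starting at `j` strictly increases when a larger value is moved there. -/
theorem tail_sum_lt_tail_sum_swap {α : Type*} [Fintype α] [LinearOrder α] (f : α → ℝ) {i j : α}
    (hij : i < j) (hf : f j < f i) :
    ∑ l ∈ univ.filter (fun l => j ≤ l), f l <
      ∑ l ∈ univ.filter (fun l => j ≤ l), f (Equiv.swap i j l) := by
  refine Finset.sum_lt_sum (fun l hl => le_apply_swap f hf.le ?_) ⟨j, by simp, by simpa using hf⟩
  exact (hij.trans_le (mem_filter.mp hl).2).ne'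

/-- Swapping two positions `i < j` with `w_{π_i} > w_{π_j}` strictly decreases the
permutation probability.  Here `π * Equiv.swap i j` is the permutation `π'` with
`π'_i = π_j`, `π'_j = π_i`, `π'_k = π_k` for `k ∉ {i, j}`. -/
theorem permProb_swap_lt {m : ℕ} (w : Fin m → ℝ) (hw : ∀ j, 0 < w j)
    (π : Equiv.Perm (Fin m)) (i j : Fin m) (hij : i < j) (hwij : w (π i) > w (π j)) :
    permProb w (π * Equiv.swap i j) < permProb w π := by
  have tail_pos (k : Fin m) : 0 < ∑ l ∈ univ.filter (fun l => k ≤ l), w (π l) :=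
    Finset.sum_pos (fun _ _ => hw _) ⟨k, by simp⟩
  simp only [permProb, Finset.prod_div_distrib, Equiv.Perm.mul_apply]
  rw [Equiv.prod_comp (Equiv.swap i j) fun k => w (π k)]
  refine div_lt_div_of_pos_left (Finset.prod_pos fun _ _ => hw _)
    (Finset.prod_pos fun k _ => tail_pos k) ?_
  exact Finset.prod_lt_prod (fun k _ => tail_pos k)
    (fun k _ => tail_sum_le_tail_sum_swap (fun l => w (π l)) hij hwij.le k)
    ⟨j, mem_univ j, tail_sum_lt_tail_sum_swap (fun l => w (π l)) hij hwij⟩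
end

section
/- Let w = (w_1, …, w_m) be a positive weight vector and π a permutation of {1, …, m} such that w_{π_1} > w_{π_2} > ⋯ > w_{π_m}. Then for every permutation σ of {1, …, m} with σ ≠ π one has P_w(σ) < P_w(π); in particular, π is the unique maximizer of P_w over the symmetric group S_m. -/
open Finset

/-- A permutation of `Fin m` that moves some index moves some index strictly down. -/
lemma exists_apply_lt_of_ne_one {m : ℕ} {τ : Equiv.Perm (Fin m)} (hτ : τ ≠ 1) :
    ∃ j, τ j < j := by
  by_contra! h
  have hsum : ∑ j, ((j : Fin m) : ℕ) = ∑ j, (τ j : ℕ) :=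
    (Equiv.sum_comp τ fun j => (j : ℕ)).symm
  have heq := (Finset.sum_eq_sum_iff_of_le fun j _ => Fin.le_def.mp (h j)).mp hsum
  exact hτ (Equiv.ext fun j => Fin.ext (heq j (mem_univ j)).symm)

/-- The negative parts of `v - v j`, summed over all indices, give the tail sum of `v - v j`. -/
lemma sum_tail_sub_eq_sum_min {m : ℕ} {v : Fin m → ℝ} (hv : StrictAnti v) (j : Fin m) :
    ∑ l ∈ univ.filter (fun l => j ≤ l), (v l - v j) = ∑ l, min (v l - v j) 0 := by
  rw [Finset.sum_filter]
  refine Finset.sum_congr rfl fun l _ => ?_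
  split_ifs with hl
  · exact (min_eq_left (sub_nonpos.mpr (hv.antitone hl))).symm
  · exact (min_eq_right (sub_nonneg.mpr (hv (not_le.mp hl)).le)).symm

lemma sum_min_comp_perm_le_sum_tail {m : ℕ} (v : Fin m → ℝ) (τ : Equiv.Perm (Fin m)) (j : Fin m) :
    ∑ l, min (v l - v j) 0 ≤ ∑ l ∈ univ.filter (fun l => j ≤ l), min (v (τ l) - v j) 0 := by
  rw [← Equiv.sum_comp τ, ← neg_le_neg_iff, ← Finset.sum_neg_distrib, ← Finset.sum_neg_distrib]
  exact Finset.sum_le_sum_of_subset_of_nonneg (filter_subset _ _)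
    fun l _ _ => neg_nonneg.mpr (min_le_right _ _)

/-- Tail sums of a decreasing sequence are minimal among its rearrangements. -/
lemma sum_tail_le_sum_tail_comp_perm {m : ℕ} {v : Fin m → ℝ} (hv : StrictAnti v)
    (τ : Equiv.Perm (Fin m)) (j : Fin m) :
    ∑ l ∈ univ.filter (fun l => j ≤ l), v l ≤ ∑ l ∈ univ.filter (fun l => j ≤ l), v (τ l) := by
  have h := ((sum_tail_sub_eq_sum_min hv j).le.trans (sum_min_comp_perm_le_sum_tail v τ j)).trans
    (Finset.sum_le_sum fun l _ => min_le_left (v (τ l) - v j) 0)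
  simpa only [Finset.sum_sub_distrib, sub_le_sub_iff_right] using h

lemma sum_tail_lt_sum_tail_comp_perm {m : ℕ} {v : Fin m → ℝ} (hv : StrictAnti v)
    {τ : Equiv.Perm (Fin m)} {j : Fin m} (hj : τ j < j) :
    ∑ l ∈ univ.filter (fun l => j ≤ l), v l < ∑ l ∈ univ.filter (fun l => j ≤ l), v (τ l) := by
  have h := ((sum_tail_sub_eq_sum_min hv j).le.trans
    (sum_min_comp_perm_le_sum_tail v τ j)).trans_lt
    (Finset.sum_lt_sum (fun l _ => min_le_left (v (τ l) - v j) 0)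
      ⟨j, by simp, min_lt_iff.mpr (Or.inr (sub_pos.mpr (hv hj)))⟩)
  simpa only [Finset.sum_sub_distrib, sub_lt_sub_iff_right] using h

lemma permProb_eq_prod_div_prod {m : ℕ} (w : Fin m → ℝ) (π : Equiv.Perm (Fin m)) :
    permProb w π = (∏ j, w j) / ∏ j, ∑ l ∈ univ.filter (fun l => j ≤ l), w (π l) := by
  rw [permProb, Finset.prod_div_distrib, Equiv.prod_comp π w]

/-- If `π` sorts the weights in strictly decreasing order, `w_{π_1} > w_{π_2} > ⋯ > w_{π_m}`,
then `π` is the unique maximizer of the permutation probability over `S_m`. -/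
theorem permProb_max_of_sorted {m : ℕ} (w : Fin m → ℝ) (hw : ∀ j, 0 < w j)
    (π : Equiv.Perm (Fin m)) (hsort : ∀ i j : Fin m, i < j → w (π j) < w (π i)) :
    ∀ σ : Equiv.Perm (Fin m), σ ≠ π → permProb w σ < permProb w π := by
  intro σ hσ
  have hv : StrictAnti fun l => w (π l) := fun i j hij => hsort i j hij
  have hτ : π⁻¹ * σ ≠ 1 := fun h => hσ (inv_mul_eq_one.mp h).symm
  obtain ⟨j, hj⟩ := exists_apply_lt_of_ne_one hτ
  have hpos : ∀ i, 0 < ∑ l ∈ univ.filter (fun l => i ≤ l), w (π l) := fun i =>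
    Finset.sum_pos (fun l _ => hw _) ⟨i, by simp⟩
  rw [permProb_eq_prod_div_prod, permProb_eq_prod_div_prod]
  refine div_lt_div_of_pos_left (Finset.prod_pos fun i _ => hw i)
    (Finset.prod_pos fun i _ => hpos i) (Finset.prod_lt_prod (fun i _ => hpos i) ?_ ?_)
  · intro i _
    simpa using sum_tail_le_sum_tail_comp_perm hv (π⁻¹ * σ) i
  · exact ⟨j, mem_univ j, by simpa using sum_tail_lt_sum_tail_comp_perm hv hj⟩
end

section
/- Let w = (w_1, …, w_m) be a positive weight vector, let 1 ≤ k ≤ m, and let σ_1, …, σ_k be distinct elements of {1, …, m}. Then the sum of P_w(π) over all permutations π of {1, …, m} whose first k positions satisfy π_j = σ_j for j = 1, …, k equals ∏_{j=1}^k w_{σ_j} / (W − ∑_{t=1}^{j−1} w_{σ_t}), where W = ∑_{l=1}^m w_l. That is, the top-k marginal of the permutation probability is the partial product of the same sequential-sampling weights. -/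
open Finset

/-- The permutation probability with the remaining weights in the denominators written as the
total weight minus the weight already drawn. -/
theorem permProb_eq_prod_sub {m : ℕ} (w : Fin m → ℝ) (π : Equiv.Perm (Fin m)) :
    permProb w π = ∏ j : Fin m,
      w (π j) / ((∑ l : Fin m, w l) - ∑ t ∈ Finset.univ.filter (fun t => t < j), w (π t)) := by
  unfold permProb
  refine Finset.prod_congr rfl fun j _ => ?_
  congr 1
  rw [eq_sub_iff_add_eq, ← Equiv.sum_comp π w,
    ← Finset.sum_filter_add_sum_filter_not univ (fun l => j ≤ l) (fun l => w (π l))]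
  simp only [not_le]

/-- Extending a partial ranking `σ` by one item `a` multiplies the sequential-sampling product
by the probability of drawing `a` next. -/
theorem prod_snoc_div_sub {m k : ℕ} (w : Fin m → ℝ) (W : ℝ) (σ : Fin k → Fin m) (a : Fin m) :
    (∏ j : Fin (k + 1), w (Fin.snoc (α := fun _ => Fin m) σ a j) /
        (W - ∑ t ∈ Finset.univ.filter (fun t => t < j),
          w (Fin.snoc (α := fun _ => Fin m) σ a t)))
      = (∏ j : Fin k, w (σ j) / (W - ∑ t ∈ Finset.univ.filter (fun t => t < j), w (σ t))) *
          (w a / (W - ∑ t, w (σ t))) := by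
  simp [Fin.prod_univ_castSucc, Finset.sum_filter, Fin.sum_univ_castSucc, Fin.castSucc_lt_last,
    (Fin.castSucc_lt_last _).not_gt, mul_div_mul_comm]

/-- After drawing fewer than all items, the probabilities of the next draw sum to one. -/
theorem sum_notMem_range_div_sub {m k : ℕ} (hk : k < m) (w : Fin m → ℝ) (hw : ∀ j, 0 < w j)
    (σ : Fin k → Fin m) (hσ : Function.Injective σ) :
    ∑ a ∈ Finset.univ.filter (fun a => a ∉ Set.range σ),
      w a / ((∑ l, w l) - ∑ t, w (σ t)) = 1 := by
  classical
  have hsum : (∑ l, w l) - ∑ t, w (σ t)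
      = ∑ a ∈ Finset.univ.filter (fun a => a ∉ Set.range σ), w a := by
    rw [sub_eq_iff_eq_add, ← Finset.sum_filter_not_add_sum_filter univ (fun a => a ∈ Set.range σ)]
    congr 1
    rw [← Finset.sum_image (f := w) (g := σ) (fun x _ y _ h => hσ h)]
    congr 1
    ext a
    simp
  have hne : (Finset.univ.filter (fun a => a ∉ Set.range σ)).Nonempty := by
    by_contra hempty
    have hsurj : Function.Surjective σ := fun a => by
      by_contra ha
      exact hempty ⟨a, by simpa using ha⟩
    have := Fintype.card_le_of_surjective σ hsurj
    simp only [Fintype.card_fin] at this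
    omega
  rw [← Finset.sum_div, hsum]
  exact div_self (Finset.sum_pos (fun a _ => hw a) hne).ne'

/-- The top-`k` marginal formula, including the empty case `k = 0`. -/
theorem sum_permProb_extending {m k : ℕ} (hk : k ≤ m) (w : Fin m → ℝ) (hw : ∀ j, 0 < w j)
    (σ : Fin k → Fin m) (hσ : Function.Injective σ) :
    ∑ π ∈ Finset.univ.filter
        (fun π : Equiv.Perm (Fin m) => ∀ j : Fin k, π (Fin.castLE hk j) = σ j),
        permProb w π
      = ∏ j : Fin k,
          w (σ j) /
            ((∑ l : Fin m, w l) - ∑ t ∈ Finset.univ.filter (fun t => t < j), w (σ t)) := by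
  classical
  induction hk using Nat.decreasingInduction with
  | self =>
    have hfilter : Finset.univ.filter
        (fun π : Equiv.Perm (Fin m) => ∀ j : Fin m, π (Fin.castLE le_rfl j) = σ j)
          = {Equiv.ofBijective σ (Finite.injective_iff_bijective.mp hσ)} := by
      ext π
      simp [Equiv.ext_iff]
    rw [hfilter, Finset.sum_singleton, permProb_eq_prod_sub]
    rfl
  | of_succ k hk ih =>
    rw [← Finset.sum_fiberwise _ (fun π : Equiv.Perm (Fin m) => π ⟨k, hk⟩),
      ← Finset.sum_filter_add_sum_filter_not univ (fun a => a ∈ Set.range σ)]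
    have hused : ∀ a ∈ Finset.univ.filter (fun a => a ∈ Set.range σ),
        ∑ π ∈ (Finset.univ.filter (fun π : Equiv.Perm (Fin m) =>
          ∀ j : Fin k, π (Fin.castLE (Nat.le_of_lt hk) j) = σ j)).filter
            (fun π => π ⟨k, hk⟩ = a), permProb w π = 0 := by
      intro a ha
      obtain ⟨j, rfl⟩ := (Finset.mem_filter.mp ha).2
      refine Finset.sum_eq_zero fun π hπ => ?_
      simp only [Finset.mem_filter, Finset.mem_univ, true_and] at hπ
      have hpos := π.injective (hπ.2.trans (hπ.1 j).symm)
      have := congrArg Fin.val hpos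
      simp only [Fin.val_castLE] at this
      omega
    have hfresh : ∀ a ∈ Finset.univ.filter (fun a => a ∉ Set.range σ),
        ∑ π ∈ (Finset.univ.filter (fun π : Equiv.Perm (Fin m) =>
          ∀ j : Fin k, π (Fin.castLE (Nat.le_of_lt hk) j) = σ j)).filter
            (fun π => π ⟨k, hk⟩ = a), permProb w π
          = (∏ j : Fin k, w (σ j) /
              ((∑ l, w l) - ∑ t ∈ Finset.univ.filter (fun t => t < j), w (σ t))) *
            (w a / ((∑ l, w l) - ∑ t, w (σ t))) := by
      intro a ha
      rw [← prod_snoc_div_sub,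
        ← ih _ (Fin.snoc_injective_iff.mpr ⟨hσ, (Finset.mem_filter.mp ha).2⟩)]
      refine Finset.sum_congr ?_ fun _ _ => rfl
      ext π
      simp only [Finset.mem_filter, Finset.mem_univ, true_and, Fin.forall_fin_succ',
        Fin.snoc_castSucc, Fin.snoc_last]
      rfl
    rw [Finset.sum_eq_zero hused, Finset.sum_congr rfl hfresh, zero_add, ← Finset.mul_sum,
      sum_notMem_range_div_sub hk w hw σ hσ, mul_one]

/-- The top-`k` marginal of the permutation probability: summing `P_w(π)` over all
permutations whose first `k` positions are `σ_1, …, σ_k` gives the partial product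
`∏_{j=1}^k w_{σ_j} / (W − ∑_{t<j} w_{σ_t})` where `W = ∑_l w_l`. -/
theorem permProb_topk_marginal {m k : ℕ} (hk1 : 1 ≤ k) (hk : k ≤ m) (w : Fin m → ℝ) (hw : ∀ j, 0 < w j)
    (σ : Fin k → Fin m) (hσ : Function.Injective σ) :
    ∑ π ∈ Finset.univ.filter
        (fun π : Equiv.Perm (Fin m) => ∀ j : Fin k, π (Fin.castLE hk j) = σ j),
        permProb w π
      = ∏ j : Fin k,
          w (σ j) /
            ((∑ l : Fin m, w l) - ∑ t ∈ Finset.univ.filter (fun t => t < j), w (σ t)) := by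
  exact sum_permProb_extending hk w hw σ hσ
end

section
/- Let w = (w_1, …, w_m) be a positive weight vector, π a permutation of {1, …, m}, and 1 ≤ ℓ < ℓ' ≤ m. Let π' be the permutation obtained by moving the item in position ℓ of π to position ℓ' (π'_{ℓ'} = π_ℓ, π'_k = π_{k+1} for ℓ ≤ k ≤ ℓ'−1, and π'_k = π_k otherwise). Writing λ_j := w_{π_j} and Λ_j := ∑_{k=j}^m λ_k, one has the identity log P_w(π) − log P_w(π') = ∑_{j=ℓ+1}^{ℓ'} ( log(Λ_j − λ_j + λ_ℓ) − log Λ_j ). -/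
open Finset

/-- The log permutation probability splits into an order-independent part and the tail sums. -/
theorem log_permProb {m : ℕ} (w : Fin m → ℝ) (hw : ∀ j, 0 < w j) (π : Equiv.Perm (Fin m)) :
    Real.log (permProb w π) = ∑ j, Real.log (w j)
      - ∑ j : Fin m, Real.log (∑ k ∈ univ.filter (fun k => j ≤ k), w (π k)) := by
  have tail_pos : ∀ j : Fin m, 0 < ∑ k ∈ univ.filter (fun k => j ≤ k), w (π k) := fun j =>
    sum_pos (fun k _ => hw _) ⟨j, by simp⟩
  rw [permProb, Real.log_prod fun j _ => (div_pos (hw _) (tail_pos j)).ne',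
    ← Equiv.sum_comp π fun j => Real.log (w j), ← sum_sub_distrib]
  exact sum_congr rfl fun j _ => Real.log_div (hw _).ne' (tail_pos j).ne'

/-- Two arrangements have the same sum over position sets `s` and `t` of equal size as soon as
every item placed in `s` by the first is placed in `t` by the second. -/
theorem sum_comp_perm_eq_of_mapsTo {α β M : Type*} [AddCommMonoid M]
    (f : β → M) (π π' : α ≃ β) (s t : Finset α)
    (hmaps : ∀ k ∈ s, ∃ i ∈ t, π' k = π i) (hcard : t.card ≤ s.card) :
    ∑ k ∈ s, f (π' k) = ∑ k ∈ t, f (π k) := by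
  have hmap : s.map (π'.trans π.symm).toEmbedding = t := by
    refine eq_of_subset_of_card_le (fun i hi => ?_) (by simpa using hcard)
    obtain ⟨k, hk, rfl⟩ := mem_map.1 hi
    obtain ⟨i, hi, hki⟩ := hmaps k hk
    simpa [hki] using hi
  simp [← hmap]

/-- Moving the item in position `ℓ` of `π` to position `ℓ' > ℓ` changes the log permutation
probability by `∑_{j=ℓ+1}^{ℓ'} (log(Λ_j − λ_j + λ_ℓ) − log Λ_j)`, where `λ_j := w_{π_j}` and
`Λ_j := ∑_{k=j}^m λ_k`. -/
theorem log_permProb_move_identity {m : ℕ} (w : Fin m → ℝ) (hw : ∀ j, 0 < w j)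
    (π π' : Equiv.Perm (Fin m)) (l l' : Fin m) (hll' : l < l')
    (h1 : π' l' = π l)
    (h2 : ∀ k : Fin m, (k : ℕ) < (l : ℕ) ∨ (l' : ℕ) < (k : ℕ) → π' k = π k)
    (h3 : ∀ k : Fin m, ∀ _ : (l : ℕ) ≤ (k : ℕ), ∀ hk2 : (k : ℕ) < (l' : ℕ),
        π' k = π ⟨(k : ℕ) + 1, lt_of_le_of_lt hk2 l'.isLt⟩) :
    Real.log (permProb w π) - Real.log (permProb w π')
      = ∑ j ∈ Finset.univ.filter (fun j : Fin m => l < j ∧ j ≤ l'),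
          (Real.log ((∑ k ∈ Finset.univ.filter (fun k => j ≤ k), w (π k)) - w (π j) + w (π l))
            - Real.log (∑ k ∈ Finset.univ.filter (fun k => j ≤ k), w (π k))) := by
  have tail_outside : ∀ j : Fin m, ¬(l < j ∧ j ≤ l') →
      ∑ k ∈ univ.filter (fun k => j ≤ k), w (π' k)
        = ∑ k ∈ univ.filter (fun k => j ≤ k), w (π k) := by
    intro j hj
    refine sum_comp_perm_eq_of_mapsTo w π π' _ _ (fun k hk => ?_) le_rfl
    simp only [mem_filter, mem_univ, true_and] at hk ⊢
    by_cases hout : (k : ℕ) < l ∨ (l' : ℕ) < k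
    · exact ⟨k, hk, h2 k hout⟩
    by_cases hkl : k = l'
    · exact ⟨l, by omega, hkl ▸ h1⟩
    · exact ⟨_, by rw [Fin.le_def] at hk ⊢; dsimp; omega, h3 k (by omega) (by omega)⟩
  have tail_inside : ∀ j : Fin m, l < j ∧ j ≤ l' →
      ∑ k ∈ univ.filter (fun k => j ≤ k), w (π' k)
        = (∑ k ∈ univ.filter (fun k => j ≤ k), w (π k)) - w (π j) + w (π l) := by
    intro j hj
    have hjmem : j ∈ univ.filter (fun k => j ≤ k) := by simp
    have hlmem : l ∉ (univ.filter (fun k => j ≤ k)).erase j := by simp [hj.1]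
    rw [← sum_erase_eq_sub hjmem, add_comm, ← sum_insert (f := fun k => w (π k)) hlmem]
    refine sum_comp_perm_eq_of_mapsTo w π π' _ _ (fun k hk => ?_) ?_
    · simp only [mem_filter, mem_univ, true_and, mem_insert, mem_erase] at hk ⊢
      by_cases hout : (k : ℕ) < l ∨ (l' : ℕ) < k
      · exact ⟨k, Or.inr ⟨by omega, hk⟩, h2 k hout⟩
      by_cases hkl : k = l'
      · exact ⟨l, Or.inl rfl, hkl ▸ h1⟩
      · refine ⟨_, Or.inr ⟨?_, ?_⟩, h3 k (by omega) (by omega)⟩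
        · rw [Ne, Fin.ext_iff]; dsimp; omega
        · rw [Fin.le_def] at hk ⊢; dsimp; omega
    · rw [card_insert_of_notMem hlmem, card_erase_add_one hjmem]
  rw [log_permProb w hw, log_permProb w hw, sub_sub_sub_cancel_left, ← sum_sub_distrib, sum_filter]
  refine sum_congr rfl fun j _ => ?_
  split_ifs with hj
  · rw [tail_inside j hj]
  · rw [tail_outside j hj, sub_self]
end
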